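/- arXiv:2303.11777 — 3 statements merged into one kernel-verified Lean document; each statement's English description precedes it below -/
import Mathlib

section
/- Let N, T ≥ 1 and let Θ be an (NT)×(NT) real matrix with entries indexed by pairs (i,t), i ∈ Fin N, t ∈ Fin T. Suppose |Θ_{(i,t),(j,s)}| ≤ ρ^{|t−s|}·M_{ij} for all i,j,t,s, where 0 ≤ ρ < 1 and the nonnegative M_{ij} satisfy M_{ii} ≤ M_ξ and ∑_{j≠i} M_{ij} ≤ M_ξ for all i. Let D be the diagonal matrix with D_{(i,t),(i,t)} = Θ_{(i,t),(i,t)}. Then (1/(NT))·‖Θ − D‖_F ≤ 2M_ξ(1+ρ)/((1−ρ)·√(NT)), where ‖·‖_F is the Frobenius norm. -/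
open Matrix

theorem geo_aux (ρ : ℝ) (h0 : 0 ≤ ρ) (h1 : ρ < 1) (n : ℕ) :
    ∑ s ∈ Finset.range n, ρ ^ s ≤ 1 / (1 - ρ) := by
  have h := geom_sum_mul_neg ρ n
  rw [le_div_iff₀ (by linarith), h]
  have : 0 ≤ ρ ^ n := by positivity
  linarith

theorem dist_aux (ρ : ℝ) (h0 : 0 ≤ ρ) (h1 : ρ < 1) (T : ℕ) (t : Fin T) :
    ∑ s : Fin T, ρ ^ (Nat.dist (t : ℕ) (s : ℕ)) ≤ (1 + ρ) / (1 - ρ) := by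
  rw [Fin.sum_univ_eq_sum_range (fun s => ρ ^ (Nat.dist (t : ℕ) s)) T]
  obtain ⟨t, ht⟩ := t
  obtain ⟨k, rfl⟩ := Nat.exists_eq_add_of_le (Nat.succ_le_of_lt ht)
  simp only
  rw [Finset.sum_range_add]
  have e1 : ∑ s ∈ Finset.range (t + 1), ρ ^ (Nat.dist t s)
      = ∑ s ∈ Finset.range (t + 1), ρ ^ s := by
    rw [← Finset.sum_range_reflect]
    refine Finset.sum_congr rfl fun s hs => ?_
    rw [Finset.mem_range] at hs
    congr 1
    unfold Nat.dist
    omega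
  have e2 : ∑ s ∈ Finset.range k, ρ ^ (Nat.dist t (t + 1 + s))
      = ρ * ∑ s ∈ Finset.range k, ρ ^ s := by
    rw [Finset.mul_sum]
    refine Finset.sum_congr rfl fun s hs => ?_
    rw [← pow_succ']
    congr 1
    unfold Nat.dist
    omega
  have g1 := geo_aux ρ h0 h1 (t + 1)
  have g2 := mul_le_mul_of_nonneg_left (geo_aux ρ h0 h1 k) h0
  have : (1 + ρ) / (1 - ρ) = 1 / (1 - ρ) + ρ * (1 / (1 - ρ)) := by ring
  rw [this]
  exact add_le_add (e1.trans_le g1) (e2.trans_le g2)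

/-- Equation (36): the average Frobenius distance between the full idiosyncratic
covariance `Θ` (entries bounded by `ρ^{|t−s|} M_{ij}`) and its diagonal `D` is at most
`2Mξ(1+ρ)/((1−ρ)√(NT))`. -/
theorem stmt4 {N T : ℕ} (hN : 1 ≤ N) (hT : 1 ≤ T)
    (Θ : Matrix (Fin N × Fin T) (Fin N × Fin T) ℝ)
    (ρ Mξ : ℝ) (Mm : Fin N → Fin N → ℝ)
    (hρ0 : 0 ≤ ρ) (hρ1 : ρ < 1) (hMξ : 0 < Mξ)
    (hMnn : ∀ i j, 0 ≤ Mm i j)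
    (hΘ : ∀ (i j : Fin N) (t s : Fin T),
      |Θ (i, t) (j, s)| ≤ ρ ^ (Nat.dist (t : ℕ) (s : ℕ)) * Mm i j)
    (hdiag : ∀ i, Mm i i ≤ Mξ)
    (hrow : ∀ i, ∑ j ∈ Finset.univ.erase i, Mm i j ≤ Mξ)
    (D : Matrix (Fin N × Fin T) (Fin N × Fin T) ℝ)
    (hD : D = Matrix.diagonal (fun p => Θ p p)) :
    (1 / ((N : ℝ) * T)) * Real.sqrt (∑ p, ∑ q, (Θ p q - D p q) ^ 2) ≤
      2 * Mξ * (1 + ρ) / ((1 - ρ) * Real.sqrt ((N : ℝ) * T)) := by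
  have hN' : (0 : ℝ) < N := by exact_mod_cast hN
  have hT' : (0 : ℝ) < T := by exact_mod_cast hT
  have hr : 0 < 1 - ρ := by linarith
  set B : ℝ := 2 * Mξ * ((1 + ρ) / (1 - ρ)) with hB
  have hB0 : 0 ≤ B := by positivity
  have hrowB : ∀ p, ∑ q, (Θ p q - D p q) ^ 2 ≤ B ^ 2 := by
    rintro ⟨i, t⟩
    have hM : ∑ j, Mm i j ≤ 2 * Mξ := by
      rw [← Finset.add_sum_erase _ _ (Finset.mem_univ i)]
      linarith [hdiag i, hrow i]
    have habs : ∑ q, |Θ (i, t) q - D (i, t) q| ≤ B := by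
      calc ∑ q, |Θ (i, t) q - D (i, t) q|
          ≤ ∑ q : Fin N × Fin T, Mm i q.1 * ρ ^ (Nat.dist (t : ℕ) (q.2 : ℕ)) := by
            refine Finset.sum_le_sum fun q _ => ?_
            by_cases hq : (i, t) = q
            · rw [hD, ← hq, Matrix.diagonal_apply_eq, sub_self, abs_zero]
              exact mul_nonneg (hMnn _ _) (by positivity)
            · rw [hD, Matrix.diagonal_apply_ne _ hq, sub_zero, mul_comm]
              exact hΘ i q.1 t q.2
        _ = (∑ j, Mm i j) * ∑ s : Fin T, ρ ^ (Nat.dist (t : ℕ) (s : ℕ)) := by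
            rw [Finset.sum_mul_sum, Fintype.sum_prod_type]
        _ ≤ B := mul_le_mul hM (dist_aux ρ hρ0 hρ1 T t)
            (Finset.sum_nonneg fun _ _ => by positivity) (by positivity)
    calc ∑ q, (Θ (i, t) q - D (i, t) q) ^ 2
        = ∑ q, |Θ (i, t) q - D (i, t) q| ^ 2 := by simp only [sq_abs]
      _ ≤ (∑ q, |Θ (i, t) q - D (i, t) q|) ^ 2 :=
          Finset.sum_sq_le_sq_sum_of_nonneg fun _ _ => abs_nonneg _
      _ ≤ B ^ 2 := by gcongr
  have htot : ∑ p, ∑ q, (Θ p q - D p q) ^ 2 ≤ (N : ℝ) * T * B ^ 2 := by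
    refine (Finset.sum_le_sum fun p _ => hrowB p).trans ?_
    simp
  have hs : Real.sqrt (∑ p, ∑ q, (Θ p q - D p q) ^ 2) ≤ Real.sqrt ((N : ℝ) * T) * B := by
    refine (Real.sqrt_le_sqrt htot).trans ?_
    rw [Real.sqrt_mul (by positivity), Real.sqrt_sq hB0]
  have hNT : (0 : ℝ) < (N : ℝ) * T := by positivity
  have hsp := Real.sqrt_pos.mpr hNT
  have hsq := Real.mul_self_sqrt hNT.le
  calc (1 / ((N : ℝ) * T)) * Real.sqrt (∑ p, ∑ q, (Θ p q - D p q) ^ 2)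
      ≤ (1 / ((N : ℝ) * T)) * (Real.sqrt ((N : ℝ) * T) * B) := by gcongr
    _ = 2 * Mξ * (1 + ρ) / ((1 - ρ) * Real.sqrt ((N : ℝ) * T)) := by
      rw [hB]
      generalize Real.sqrt ((N : ℝ) * T) = r at *
      rw [← hsq]
      field_simp
end

section
/- Let L be a real N×r matrix of rank r, let V be a real N×r matrix with V′V = I_r whose column space equals the column space of L, let M be an r×r diagonal matrix with strictly positive diagonal entries, and let S be an r×r diagonal matrix whose diagonal entries are each +1 or −1. Define R := (L′VV′L)⁻¹L′V S M^{1/2}, where M^{1/2} is the diagonal matrix of positive square roots of the entries of M. Then R is invertible, L·R = V S M^{1/2}, and R⁻¹ = M^{−1/2} S V′ L. -/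
open Matrix

/-- Appendix C identification: with `L` of rank `r`, `V` orthonormal spanning the same
column space, `M = diag d` with `d > 0`, `S = diag s` with `s_j = ±1`, the matrix
`R = (L′VV′L)⁻¹ L′V S M^{1/2}` is invertible, `L R = V S M^{1/2}` and
`R⁻¹ = M^{−1/2} S V′ L`. -/
theorem stmt6 {N r : ℕ} (L V : Matrix (Fin N) (Fin r) ℝ)
    (hLrank : L.rank = r)
    (hV : Vᵀ * V = 1)
    (hspan : LinearMap.range L.mulVecLin = LinearMap.range V.mulVecLin)
    (d s : Fin r → ℝ) (hd : ∀ j, 0 < d j) (hs : ∀ j, s j = 1 ∨ s j = -1)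
    (R : Matrix (Fin r) (Fin r) ℝ)
    (hR : R = (Lᵀ * V * Vᵀ * L)⁻¹ * Lᵀ * V * Matrix.diagonal s *
        Matrix.diagonal (fun j => Real.sqrt (d j))) :
    IsUnit R ∧
      L * R = V * Matrix.diagonal s * Matrix.diagonal (fun j => Real.sqrt (d j)) ∧
      R⁻¹ = Matrix.diagonal (fun j => (Real.sqrt (d j))⁻¹) * Matrix.diagonal s * Vᵀ * L := by
  have key : ∀ A B : Matrix (Fin N) (Fin r) ℝ,
      LinearMap.range A.mulVecLin ≤ LinearMap.range B.mulVecLin →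
      ∃ C : Matrix (Fin r) (Fin r) ℝ, A = B * C := by
    intro A B h
    have h1 : ∀ j, ∃ c : Fin r → ℝ, B *ᵥ c = A *ᵥ (Pi.single j 1) := by
      intro j
      obtain ⟨c, hc⟩ := h ⟨Pi.single j 1, rfl⟩
      exact ⟨c, hc⟩
    choose c hc using h1
    refine ⟨Matrix.of (fun i j => c j i), ?_⟩
    ext i j
    have := congrFun (hc j) i
    rw [Matrix.mulVec_single_one] at this
    simpa [Matrix.mul_apply, Matrix.mulVec, dotProduct] using this.symm
  obtain ⟨B, hB⟩ := key L V hspan.le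
  obtain ⟨C, hC⟩ := key V L hspan.ge
  have hVL : Vᵀ * L = B := by rw [hB, ← Matrix.mul_assoc, hV, Matrix.one_mul]
  have hBC : B * C = 1 := by rw [← hVL, Matrix.mul_assoc, ← hC, hV]
  have hCB : C * B = 1 := mul_eq_one_comm.mp hBC
  have hLV : Lᵀ * V = Bᵀ := by rw [← hVL, transpose_mul, transpose_transpose]
  have hBCt : Bᵀ * Cᵀ = 1 := by rw [← transpose_mul, hCB, transpose_one]
  have hCBt : Cᵀ * Bᵀ = 1 := mul_eq_one_comm.mp hBCt
  have hinv : (Lᵀ * V * Vᵀ * L)⁻¹ = C * Cᵀ := by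
    apply Matrix.inv_eq_left_inv
    rw [Matrix.mul_assoc (Lᵀ * V), hVL, hLV, Matrix.mul_assoc C, ← Matrix.mul_assoc Cᵀ, hCBt,
      Matrix.one_mul, hCB]
  have hR2 : R = C * Matrix.diagonal s * Matrix.diagonal (fun j => Real.sqrt (d j)) := by
    rw [hR, hinv, Matrix.mul_assoc (C * Cᵀ), hLV, Matrix.mul_assoc C, hCBt, Matrix.mul_one]
  have hss : Matrix.diagonal s * Matrix.diagonal s = 1 := by
    rw [Matrix.diagonal_mul_diagonal, ← Matrix.diagonal_one]
    congr 1
    ext j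
    rcases hs j with h | h <;> simp [h]
  have hdd : Matrix.diagonal (fun j => (Real.sqrt (d j))⁻¹) *
      Matrix.diagonal (fun j => Real.sqrt (d j)) = 1 := by
    rw [Matrix.diagonal_mul_diagonal, ← Matrix.diagonal_one]
    congr 1
    ext j
    exact inv_mul_cancel₀ (Real.sqrt_pos.mpr (hd j)).ne'
  have hleft : (Matrix.diagonal (fun j => (Real.sqrt (d j))⁻¹) * Matrix.diagonal s * Vᵀ * L) * R
      = 1 := by
    rw [hR2, Matrix.mul_assoc _ Vᵀ L, hVL]
    calc _ = Matrix.diagonal (fun j => (Real.sqrt (d j))⁻¹) * (Matrix.diagonal s * (B * C) *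
          Matrix.diagonal s) * Matrix.diagonal (fun j => Real.sqrt (d j)) := by
          simp only [Matrix.mul_assoc]
      _ = 1 := by rw [hBC, Matrix.mul_one, hss, Matrix.mul_one, hdd]
  refine ⟨IsUnit.of_mul_eq_one_right _ hleft, ?_, Matrix.inv_eq_left_inv hleft⟩
  rw [hR2, ← Matrix.mul_assoc, ← Matrix.mul_assoc, ← hC]
end

section
/- Let Λ be a real N×r matrix with rows λ_j′ satisfying ‖λ_j‖ ≤ M_Λ for all j, let Σ = diag(σ_1²,…,σ_N²) with σ_j² ≥ C > 0 for all j, let Γ be a real N×N matrix with ∑_{j=1}^N |Γ_{ji}| ≤ M_ξ for a fixed index i, and suppose the smallest eigenvalue of N⁻¹Λ′Σ⁻¹Λ is at least c > 0 (in particular Λ′Σ⁻¹Λ is invertible). Then the vector D_i := σ_i⁻²·(N⁻¹Λ′Σ⁻¹Λ)⁻¹·(N⁻¹ ∑_{j=1}^N λ_j Γ_{ji}/σ_j²) satisfies ‖D_i‖ ≤ M_Λ·M_ξ/(c·C²·N). Moreover D_i = σ_i⁻²·(Λ′Σ⁻¹Λ)⁻¹ Λ′ Σ⁻¹ Γ e_i,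 where e_i is the i-th standard basis vector of ℝ^N. -/
open Matrix

/-- Euclidean norm of a vector in `ℝ^r`. -/
noncomputable def enorm {r : ℕ} (v : Fin r → ℝ) : ℝ := Real.sqrt (∑ k, v k ^ 2)

lemma enorm_eq_norm {r : ℕ} (v : Fin r → ℝ) : _root_.enorm v = ‖WithLp.toLp 2 v‖ := by
  simp [_root_.enorm, EuclideanSpace.norm_eq]

lemma rayleigh_lower {r : ℕ} (A : Matrix (Fin r) (Fin r) ℝ) (hH : A.IsHermitian) (c : ℝ)
    (hmin : ∀ k, c ≤ hH.eigenvalues k) (x : Fin r → ℝ) :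
    c * (x ⬝ᵥ x) ≤ x ⬝ᵥ (A *ᵥ x) := by
  have h1 : (Matrix.diagonal (fun k => hH.eigenvalues k - c)).PosSemidef :=
    Matrix.PosSemidef.diagonal (fun k => sub_nonneg.2 (hmin k))
  have h2 := h1.mul_mul_conjTranspose_same (hH.eigenvectorUnitary : Matrix (Fin r) (Fin r) ℝ)
  have hU : (hH.eigenvectorUnitary : Matrix (Fin r) (Fin r) ℝ) *
      (hH.eigenvectorUnitary : Matrix (Fin r) (Fin r) ℝ)ᴴ = 1 :=
    Unitary.mul_star_self_of_mem hH.eigenvectorUnitary.2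
  have h3 : (hH.eigenvectorUnitary : Matrix (Fin r) (Fin r) ℝ) *
      Matrix.diagonal (fun k => hH.eigenvalues k - c) *
      (hH.eigenvectorUnitary : Matrix (Fin r) (Fin r) ℝ)ᴴ = A - c • 1 := by
    have hs := hH.spectral_theorem
    rw [Unitary.conjStarAlgAut_apply] at hs
    have : Matrix.diagonal (fun k => hH.eigenvalues k - c)
        = Matrix.diagonal (RCLike.ofReal ∘ hH.eigenvalues : Fin r → ℝ) - c • 1 := by
      ext a b
      by_cases h : a = b <;> simp [h, Matrix.diagonal_apply, Matrix.one_apply]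
    rw [this, mul_sub, sub_mul]
    congr 1
    · exact hs.symm
    · rw [Matrix.mul_smul, Matrix.smul_mul, Matrix.mul_one, hU]
  rw [h3] at h2
  have := h2.dotProduct_mulVec_nonneg x
  simp [Matrix.sub_mulVec, Matrix.smul_mulVec, dotProduct_sub] at this
  exact this

lemma inv_bound {r : ℕ} (A : Matrix (Fin r) (Fin r) ℝ) (hH : A.IsHermitian) (c : ℝ) (hc : 0 < c)
    (hmin : ∀ k, c ≤ hH.eigenvalues k) (hA : IsUnit A) (b : Fin r → ℝ) :
    ‖WithLp.toLp 2 (A⁻¹ *ᵥ b)‖ ≤ ‖WithLp.toLp 2 b‖ / c := by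
  set x := A⁻¹ *ᵥ b with hx
  have hAx : A *ᵥ x = b := by
    rw [hx, Matrix.mulVec_mulVec, Matrix.mul_nonsing_inv _ ((Matrix.isUnit_iff_isUnit_det A).1 hA),
      Matrix.one_mulVec]
  have h := rayleigh_lower A hH c hmin x
  rw [hAx] at h
  have e1 : x ⬝ᵥ x = ‖WithLp.toLp 2 x‖ ^ 2 := by
    rw [EuclideanSpace.norm_sq_eq]; simp [dotProduct, sq]
  have e2 : x ⬝ᵥ b ≤ ‖WithLp.toLp 2 x‖ * ‖WithLp.toLp 2 b‖ := by
    have := real_inner_le_norm (WithLp.toLp 2 x) (WithLp.toLp 2 b)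
    rw [EuclideanSpace.inner_toLp_toLp] at this
    simpa [dotProduct_comm] using this
  rw [e1] at h
  rw [le_div_iff₀ hc]
  rcases (norm_nonneg (WithLp.toLp 2 x)).eq_or_lt with h0 | h0
  · rw [← h0]; simp
  · have : ‖WithLp.toLp 2 x‖ * (‖WithLp.toLp 2 x‖ * c) ≤ ‖WithLp.toLp 2 x‖ * ‖WithLp.toLp 2 b‖ := by
      nlinarith
    exact le_of_mul_le_mul_left this h0

/-- Section 6.1, equation (35): the Gateaux derivative
`D_i = σ_i⁻²(N⁻¹Λ′Σ⁻¹Λ)⁻¹(N⁻¹∑_j λ_j Γ_{ji}/σ_j²)` satisfies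
`‖D_i‖ ≤ M_Λ M_ξ/(c C² N)`, and `D_i = σ_i⁻²(Λ′Σ⁻¹Λ)⁻¹Λ′Σ⁻¹Γ e_i`. -/
theorem stmt7 {N r : ℕ} (hN : 0 < N)
    (Λ : Matrix (Fin N) (Fin r) ℝ) (MΛ Mξ C c : ℝ)
    (hMΛ : ∀ j, _root_.enorm (Λ j) ≤ MΛ)
    (σ2 : Fin N → ℝ) (hC : 0 < C) (hσ : ∀ j, C ≤ σ2 j)
    (Γ : Matrix (Fin N) (Fin N) ℝ) (i : Fin N)
    (hΓ : ∑ j, |Γ j i| ≤ Mξ)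
    (hc : 0 < c)
    (hH : (((N : ℝ)⁻¹) • (Λᵀ * (Matrix.diagonal σ2)⁻¹ * Λ)).IsHermitian)
    (hmin : ∀ k, c ≤ hH.eigenvalues k)
    (hinv : IsUnit (Λᵀ * (Matrix.diagonal σ2)⁻¹ * Λ))
    (D : Fin r → ℝ)
    (hD : D = (σ2 i)⁻¹ •
      ((((N : ℝ)⁻¹) • (Λᵀ * (Matrix.diagonal σ2)⁻¹ * Λ))⁻¹ *ᵥ
        ((N : ℝ)⁻¹ • ∑ j, (Γ j i / σ2 j) • Λ j))) :
    _root_.enorm D ≤ MΛ * Mξ / (c * C ^ 2 * N) ∧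
      D = (σ2 i)⁻¹ •
        (((Λᵀ * (Matrix.diagonal σ2)⁻¹ * Λ)⁻¹ * Λᵀ * (Matrix.diagonal σ2)⁻¹ * Γ) *ᵥ
          Pi.single i 1) := by
  have hN' : (0 : ℝ) < N := by exact_mod_cast hN
  have hpos : ∀ j, 0 < σ2 j := fun j => hC.trans_le (hσ j)
  have hdet := (Matrix.isUnit_iff_isUnit_det _).1 hinv
  have hdiag : (Matrix.diagonal σ2)⁻¹ = Matrix.diagonal (fun j => (σ2 j)⁻¹) := by
    apply Matrix.inv_eq_right_inv
    rw [Matrix.diagonal_mul_diagonal, ← Matrix.diagonal_one]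
    congr 1; funext j; exact mul_inv_cancel₀ (hpos j).ne'
  have hsinv : ((N : ℝ)⁻¹ • (Λᵀ * (Matrix.diagonal σ2)⁻¹ * Λ))⁻¹
      = (N : ℝ) • (Λᵀ * (Matrix.diagonal σ2)⁻¹ * Λ)⁻¹ := by
    apply Matrix.inv_eq_right_inv
    rw [Matrix.smul_mul, Matrix.mul_smul, Matrix.mul_nonsing_inv _ hdet, smul_smul,
      inv_mul_cancel₀ hN'.ne', one_smul]
  constructor
  · have hA : IsUnit ((N : ℝ)⁻¹ • (Λᵀ * (Matrix.diagonal σ2)⁻¹ * Λ)) :=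
      hinv.smul (Units.mk0 (N : ℝ)⁻¹ (inv_ne_zero hN'.ne'))
    have hb := inv_bound _ hH c hc hmin hA ((N : ℝ)⁻¹ • ∑ j, (Γ j i / σ2 j) • Λ j)
    have hM0 : 0 ≤ MΛ := (Real.sqrt_nonneg _).trans (hMΛ i)
    have hsum : ‖WithLp.toLp 2 (∑ j, (Γ j i / σ2 j) • Λ j)‖ ≤ MΛ * Mξ / C := by
      rw [WithLp.toLp_sum]
      refine (norm_sum_le _ _).trans ?_
      calc ∑ j, ‖WithLp.toLp 2 ((Γ j i / σ2 j) • Λ j)‖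
          ≤ ∑ j, |Γ j i| * (MΛ / C) := by
            refine Finset.sum_le_sum fun j _ => ?_
            rw [WithLp.toLp_smul, norm_smul, ← enorm_eq_norm, Real.norm_eq_abs, abs_div,
              abs_of_pos (hpos j)]
            calc |Γ j i| / σ2 j * _root_.enorm (Λ j) ≤ |Γ j i| / C * MΛ := by
                  apply mul_le_mul _ (hMΛ j) (Real.sqrt_nonneg _) (by positivity)
                  exact div_le_div_of_nonneg_left (abs_nonneg _) hC (hσ j)
              _ = |Γ j i| * (MΛ / C) := by ring
        _ = (∑ j, |Γ j i|) * (MΛ / C) := by rw [Finset.sum_mul]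
        _ ≤ Mξ * (MΛ / C) := mul_le_mul_of_nonneg_right hΓ (by positivity)
        _ = MΛ * Mξ / C := by ring
    rw [enorm_eq_norm, hD, WithLp.toLp_smul, norm_smul, norm_inv, Real.norm_eq_abs,
      abs_of_pos (hpos i)]
    rw [WithLp.toLp_smul 2 (N : ℝ)⁻¹, norm_smul, norm_inv, Real.norm_eq_abs, abs_of_pos hN'] at hb
    have h2 : (N : ℝ)⁻¹ * ‖WithLp.toLp 2 (∑ j, (Γ j i / σ2 j) • Λ j)‖ / c
        ≤ (N : ℝ)⁻¹ * (MΛ * Mξ / C) / c := by gcongr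
    have h3 : (σ2 i)⁻¹ ≤ C⁻¹ := inv_anti₀ hC (hσ i)
    refine (mul_le_mul h3 (hb.trans h2) (norm_nonneg _) (by positivity)).trans (le_of_eq ?_)
    field_simp
  · have hassoc : (Λᵀ * (Matrix.diagonal σ2)⁻¹ * Λ)⁻¹ * Λᵀ * (Matrix.diagonal σ2)⁻¹ * Γ
        = (Λᵀ * (Matrix.diagonal σ2)⁻¹ * Λ)⁻¹ * (Λᵀ * ((Matrix.diagonal σ2)⁻¹ * Γ)) := by
      simp only [Matrix.mul_assoc]
    rw [hD, hsinv, hassoc, Matrix.smul_mulVec, Matrix.mulVec_smul, smul_smul (N : ℝ),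
      mul_inv_cancel₀ hN'.ne', one_smul, ← Matrix.mulVec_mulVec]
    congr 2
    ext k
    rw [hdiag]
    simp [Matrix.mulVec_single, Matrix.mul_apply, Matrix.diagonal_mul, Finset.sum_apply]
    refine Finset.sum_congr rfl fun j _ => ?_
    simp [Matrix.diagonal_apply]
    ring
end
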